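/- Let K be a field, n ≥ 2, and let f(x_1,…,x_m) be a multilinear polynomial over K. Then Im(f) on M_n(K) is contained in sl_n(K), the set of trace-zero matrices, if and only if f satisfies (S2). -/

import Mathlib

/-- Evaluation of the multilinear polynomial `f(x₁,…,x_m) = ∑_{σ ∈ S_m} α_σ x_{σ(1)}⋯x_{σ(m)}`
given by coefficients `α` at the tuple `a`. -/
def mlEval {K A : Type} [Field K] [Ring A] [Algebra K A] {m : ℕ}
    (α : Equiv.Perm (Fin m) → K) (a : Fin m → A) : A :=
  ∑ σ : Equiv.Perm (Fin m), α σ • (List.ofFn fun i => a (σ i)).prod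

/-- The image of the multilinear polynomial with coefficients `α` on the algebra `A`. -/
def mlImage {K A : Type} [Field K] [Ring A] [Algebra K A] {m : ℕ}
    (α : Equiv.Perm (Fin m) → K) : Set A :=
  Set.range (mlEval α)

/-- `a` is homogeneous of degree `g` in the Vasilovsky `ZMod n`-grading of `Mₙ(K)`:
`a` lies in the span of the matrix units `E i j` with `j - i ≡ g (mod n)`. -/
def VasHomog {K : Type} [Field K] {n : ℕ} (g : ZMod n)
    (a : Matrix (Fin n) (Fin n) K) : Prop :=
  ∀ i j : Fin n, ((j.val : ZMod n) - (i.val : ZMod n)) ≠ g → a i j = 0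

/-- Statement (S0): `f` vanishes on homogeneous tuples whose degrees sum to `0`. -/
def StmtS0 {K : Type} [Field K] (n : ℕ) {m : ℕ} (α : Equiv.Perm (Fin m) → K) : Prop :=
  ∀ (g : Fin m → ZMod n) (a : Fin m → Matrix (Fin n) (Fin n) K),
    (∀ i, VasHomog (g i) (a i)) → (∑ i, g i) = 0 → mlEval α a = 0

/-- Statement (S1): `f` vanishes on homogeneous tuples whose degrees sum to a nonzero element. -/
def StmtS1 {K : Type} [Field K] (n : ℕ) {m : ℕ} (α : Equiv.Perm (Fin m) → K) : Prop :=
  ∀ (g : Fin m → ZMod n) (a : Fin m → Matrix (Fin n) (Fin n) K),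
    (∀ i, VasHomog (g i) (a i)) → (∑ i, g i) ≠ 0 → mlEval α a = 0

/-- Statement (S2): `f` has trace-zero values on homogeneous tuples whose degrees sum to `0`. -/
def StmtS2 {K : Type} [Field K] (n : ℕ) {m : ℕ} (α : Equiv.Perm (Fin m) → K) : Prop :=
  ∀ (g : Fin m → ZMod n) (a : Fin m → Matrix (Fin n) (Fin n) K),
    (∀ i, VasHomog (g i) (a i)) → (∑ i, g i) = 0 → Matrix.trace (mlEval α a) = 0

/-- The set of scalar matrices in `Mₙ(K)`. -/
def scalarSet (K : Type) [Field K] (n : ℕ) : Set (Matrix (Fin n) (Fin n) K) :=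
  {b | ∃ c : K, b = c • (1 : Matrix (Fin n) (Fin n) K)}

/-- The set `slₙ(K)` of trace-zero matrices in `Mₙ(K)`. -/
def slSet (K : Type) [Field K] (n : ℕ) : Set (Matrix (Fin n) (Fin n) K) :=
  {b | Matrix.trace b = 0}

lemma vas_prod {K : Type} [Field K] {n : ℕ} : ∀ {m : ℕ} (g : Fin m → ZMod n)
    (a : Fin m → Matrix (Fin n) (Fin n) K), (∀ i, VasHomog (g i) (a i)) →
    VasHomog (∑ i, g i) (List.ofFn a).prod
  | 0, g, a, _ => by
    intro i j h
    have : i ≠ j := by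
      rintro rfl
      simp at h
    simp [Matrix.one_apply, this]
  | m + 1, g, a, ha => by
    have ih := vas_prod (fun i => g i.succ) (fun i => a i.succ) (fun i => ha i.succ)
    intro i j h
    rw [List.ofFn_succ, List.prod_cons, Matrix.mul_apply]
    refine Finset.sum_eq_zero fun k _ => ?_
    by_cases h1 : ((k.val : ZMod n) - (i.val : ZMod n)) = g 0
    · rw [ih k j, mul_zero]
      intro h2
      apply h
      rw [Fin.sum_univ_succ, ← h1, ← h2]
      ring
    · rw [ha 0 i k h1, zero_mul]

lemma vas_trace {K : Type} [Field K] {n : ℕ} (g : ZMod n) (hg : g ≠ 0)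
    (a : Matrix (Fin n) (Fin n) K) (ha : VasHomog g a) : Matrix.trace a = 0 := by
  refine Finset.sum_eq_zero fun k _ => ?_
  refine ha k k ?_
  rw [sub_self]
  exact hg.symm

noncomputable def mlMap {K A : Type} [Field K] [Ring A] [Algebra K A] {m : ℕ}
    (α : Equiv.Perm (Fin m) → K) : MultilinearMap K (fun _ : Fin m => A) A :=
  ∑ σ : Equiv.Perm (Fin m), α σ • (MultilinearMap.mkPiAlgebraFin K m A).domDomCongr σ

lemma mlMap_apply {K A : Type} [Field K] [Ring A] [Algebra K A] {m : ℕ}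
    (α : Equiv.Perm (Fin m) → K) (a : Fin m → A) : mlMap α a = mlEval α a := by
  simp [mlMap, mlEval, MultilinearMap.sum_apply]

/-- the image of a multilinear polynomial on `Mₙ(K)` is contained in `slₙ(K)`
iff `f` satisfies (S2). -/
theorem stmt_3 {K : Type} [Field K] (n : ℕ) (hn : 2 ≤ n) {m : ℕ}
    (α : Equiv.Perm (Fin m) → K) :
    (mlImage α : Set (Matrix (Fin n) (Fin n) K)) ⊆ slSet K n ↔ StmtS2 n α := by
  constructor
  · intro h g a _ _
    exact h ⟨a, rfl⟩
  · rintro h _ ⟨a, rfl⟩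
    haveI : NeZero n := ⟨by omega⟩
    classical
    let c : Fin m → ZMod n → Matrix (Fin n) (Fin n) K := fun k g =>
      Matrix.of fun i j => if (j.val : ZMod n) - (i.val : ZMod n) = g then a k i j else 0
    have hc : ∀ k g, VasHomog g (c k g) := by
      intro k g i j hij
      simp [c, hij]
    have hac : a = fun k => ∑ g, c k g := by
      funext k
      ext i j
      simp [c, Matrix.sum_apply]
    change Matrix.trace (mlEval α a) = 0
    rw [← mlMap_apply, hac, MultilinearMap.map_sum, Matrix.trace_sum]
    refine Finset.sum_eq_zero fun r _ => ?_
    rw [mlMap_apply]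
    by_cases hr : ∑ i, r i = 0
    · exact h r _ (fun i => hc i (r i)) hr
    · rw [mlEval, Matrix.trace_sum]
      refine Finset.sum_eq_zero fun σ _ => ?_
      rw [Matrix.trace_smul, vas_trace (∑ i, r (σ i)), smul_zero]
      · rwa [Equiv.sum_comp σ r]
      · exact vas_prod (fun i => r (σ i)) _ (fun i => hc (σ i) (r (σ i)))
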